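/- Let c ∈ ℤ[ω] satisfy c ≡ 1 + α₂λ² + α₃λ³ (mod 9) with α₂, α₃ ∈ {−1,0,1} and λ = 1 − ω. Then (ω/c)₃ = ω^{α₂} and (λ/c)₃ = ω^{−α₃}. In particular, if c ≡ 1 (mod 9), then (ω/c)₃ = (λ/c)₃ = 1. -/

import Mathlib

open Complex

noncomputable section

/-- The primitive cube root of unity `ω = e^{2πi/3}`. -/
def ω : ℂ := Complex.exp (2 * Real.pi * Complex.I / 3)

/-- The ring of Eisenstein integers `ℤ[ω]`, as a subring of `ℂ`. -/
def Zω : Subring ℂ := Subring.closure {ω}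

/-- `ω` as an element of `ℤ[ω]`. -/
def ωZ : Zω := ⟨ω, Subring.subset_closure rfl⟩

/-- The ramified prime `λ = 1 - ω` of `ℤ[ω]`. -/
def lamZ : Zω := 1 - ωZ

/-- The norm `N(a) = |a|²` from `ℚ(ω)` to `ℚ`, restricted to `ℤ[ω]`. -/
def Nm (a : Zω) : ℝ := Complex.normSq (a : ℂ)

/-- The norm of an Eisenstein integer, as a natural number. -/
def NmNat (a : Zω) : ℕ := ⌊Complex.normSq (a : ℂ)⌋₊

/-- `e(z) = e^{2πi Tr(z)} = e^{2πi (z + z̄)}`. -/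
def eE (z : ℂ) : ℂ := Complex.exp (2 * Real.pi * Complex.I * (z + (starRingEnd ℂ) z))

/-- `χ` is the cubic residue symbol `χ a b = (a/b)₃` on `ℤ[ω]`:
it is multiplicative in both arguments, and at prime moduli `π` coprime to `3`
it is given by the power-residue congruence
`(a/π)₃ ≡ a^{(N(π)-1)/3} (mod π)`, with values among `{1, ω, ω²}` (and `0` when `π ∣ a`). -/
def IsCubicSymbol (χ : Zω → Zω → Zω) : Prop :=
  (∀ a b₁ b₂ : Zω, χ a (b₁ * b₂) = χ a b₁ * χ a b₂) ∧
  (∀ a₁ a₂ b : Zω, χ (a₁ * a₂) b = χ a₁ b * χ a₂ b) ∧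
  (∀ a : Zω, χ a 1 = 1) ∧
  (∀ a π : Zω, Prime π → IsCoprime π 3 →
    (π ∣ a → χ a π = 0) ∧
    (¬ π ∣ a →
      ((χ a π : ℂ) = 1 ∨ (χ a π : ℂ) = ω ∨ (χ a π : ℂ) = ω ^ 2) ∧
      π ∣ (a ^ ((NmNat π - 1) / 3) - χ a π)))

/-- The shifted cubic Gauss sum `g(ν,c) = Σ_{d mod c} (d/c)₃ e(νd/c)`,
relative to a cubic residue symbol `χ`. -/
def gauss (χ : Zω → Zω → Zω) (ν c : Zω) : ℂ :=
  ∑' q : Zω ⧸ Ideal.span {c},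
    ((χ (Quotient.out q) c : Zω) : ℂ) * eE (((ν * Quotient.out q : Zω) : ℂ) / (c : ℂ))

/-- `μ` is the Möbius function of `ℤ[ω]`. -/
def IsMoebiusZω (μ : Zω → ℤ) : Prop :=
  μ 1 = 1 ∧
  (∀ a : Zω, ¬ Squarefree a → μ a = 0) ∧
  (∀ a b : Zω, IsCoprime a b → μ (a * b) = μ a * μ b) ∧
  (∀ π : Zω, Prime π → μ π = -1)

end

/-!
Let `π ∤ 3` be a prime, `F = ℤ[ω]/π`, `ψ` the cubic residue character of `F`, `J = J(ψ, ψ)` its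
Jacobi sum, and `T` the sum of `ψ(1 - x)` over the `x` with `ψ(x) = ω`. Orthogonality gives
`3T = ω²(1 + J)`, so `-J = 1 + 3w` with `(1 + ω)w = T`; on the other hand `-J` is divisible by `π`
and has the same norm, hence is an associate of `π`. Modulo `π` the polynomial
`X ^ ((Nπ - 1)/3) - ω` is the product of the `X - x` with `ψ(x) = ω`, so that at `X = 1` the symbol
`(λ/π)₃` is the product of the terms of `T`. The additive character `u + vω ↦ ω ^ v` fixes the cube
roots of unity, hence sends the sum `T` to that product: `(λ/π)₃ = ω ^ u` where
`-J = 1 + 3(u + vω)`.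

This law and `(ω/c)₃ = ω ^ ((Nc - 1)/3)` are multiplicative in `c`, the only unit `≡ 1 (mod 3)`
being `1`, and therefore hold for all `c ≡ 1 (mod 3)`.
-/

/-! ### The ring `ℤ[ω]` -/

section EisensteinIntegers

theorem isPrimitiveRoot_ω : IsPrimitiveRoot ω 3 := Complex.isPrimitiveRoot_exp 3 (by norm_num)

theorem zpow_ω_eq {m n : ℤ} (h : (3 : ℤ) ∣ m - n) : ω ^ m = ω ^ n := by
  rw [← sub_add_cancel m n, zpow_add₀ (isPrimitiveRoot_ω.ne_zero (by norm_num)),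
    (isPrimitiveRoot_ω.zpow_eq_one_iff_dvd _).mpr h, one_mul]

theorem isPrimitiveRoot_ωZ : IsPrimitiveRoot ωZ 3 :=
  IsPrimitiveRoot.coe_submonoidClass_iff.mp isPrimitiveRoot_ω

theorem ωZ_sq : ωZ ^ 2 = -1 - ωZ := by
  have h := isPrimitiveRoot_ωZ.geom_sum_eq_zero (by norm_num)
  simp only [Finset.sum_range_succ, Finset.sum_range_zero] at h
  linear_combination h

theorem ω_re : ω.re = -1 / 2 := by
  rw [ω, show (2 * Real.pi * Complex.I / 3 : ℂ) = (Real.pi - Real.pi / 3 : ℝ) * Complex.I by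
    push_cast; ring, exp_ofReal_mul_I_re, Real.cos_pi_sub, Real.cos_pi_div_three]
  norm_num

theorem normSq_ω : normSq ω = 1 := by
  rw [normSq_eq_norm_sq, isPrimitiveRoot_ω.norm'_eq_one (by norm_num), one_pow]

theorem ω_im_ne_zero : ω.im ≠ 0 := fun h => by
  have := normSq_ω
  rw [normSq_apply, ω_re, h] at this
  norm_num at this

theorem normSq_add_mul_ω (s t : ℝ) : normSq (s + t * ω) = s ^ 2 - s * t + t ^ 2 := by
  rw [normSq_add, normSq_mul, normSq_ω, normSq_ofReal, normSq_ofReal]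
  simp only [map_mul, conj_ofReal, mul_re, ofReal_re, conj_re, ω_re, ofReal_im, zero_mul, sub_zero]
  ring

theorem exists_eq_add_mul_ω (z : ℂ) : ∃ s t : ℝ, z = s + t * ω := by
  refine ⟨z.re - z.im / ω.im * ω.re, z.im / ω.im, Complex.ext ?_ ?_⟩ <;>
    simp [ω_im_ne_zero]

/-- The homomorphism from the abstract quadratic ring `ℤ[X]/(X² + X + 1)` to `ℤ[ω]` sending the
class of `X` to `ω`. -/
noncomputable def eisensteinHom : QuadraticAlgebra ℤ (-1) (-1) →ₐ[ℤ] Zω :=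
  QuadraticAlgebra.lift ⟨ωZ, by
    rw [← sq, ωZ_sq]
    simp [sub_eq_add_neg]⟩

theorem eisensteinHom_apply (z : QuadraticAlgebra ℤ (-1) (-1)) :
    eisensteinHom z = z.re + z.im * ωZ := by
  simp [eisensteinHom, QuadraticAlgebra.lift]

theorem normSq_eisensteinHom (z : QuadraticAlgebra ℤ (-1) (-1)) :
    normSq (eisensteinHom z : ℂ) = QuadraticAlgebra.norm z := by
  have h := normSq_add_mul_ω z.re z.im
  push_cast at h
  rw [eisensteinHom_apply, QuadraticAlgebra.norm_def]
  push_cast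
  rw [show ((ωZ : Zω) : ℂ) = ω from rfl, h]
  ring

theorem eisensteinHom_injective : Function.Injective eisensteinHom := by
  rw [injective_iff_map_eq_zero]
  intro z hz
  have h : (z.re : ℂ) + z.im * ω = 0 := by
    simpa [eisensteinHom_apply, ωZ] using congrArg (Subtype.val) hz
  have him : z.im = 0 := by
    simpa [ω_im_ne_zero] using congrArg Complex.im h
  have hre : z.re = 0 := by
    simpa [him] using h
  exact QuadraticAlgebra.ext hre him

theorem eisensteinHom_surjective : Function.Surjective eisensteinHom := by
  have hle : Zω ≤ (Zω.subtype.comp eisensteinHom.toRingHom).range :=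
    Subring.closure_le.mpr <| Set.singleton_subset_iff.mpr
      ⟨⟨0, 1⟩, by simp [eisensteinHom_apply, ωZ]⟩
  intro z
  obtain ⟨y, hy⟩ := hle z.2
  exact ⟨y, Subtype.ext hy⟩

/-- `ℤ[ω]` as the quadratic ring `ℤ[X]/(X² + X + 1)`; the inverse gives the coordinates in the
basis `1, ω`. -/
noncomputable def eisensteinEquiv : QuadraticAlgebra ℤ (-1) (-1) ≃ₐ[ℤ] Zω :=
  AlgEquiv.ofBijective eisensteinHom ⟨eisensteinHom_injective, eisensteinHom_surjective⟩

theorem eisensteinEquiv_symm_add_mul_ωZ (a b : ℤ) :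
    eisensteinEquiv.symm (a + b * ωZ) = ⟨a, b⟩ :=
  eisensteinEquiv.symm_apply_eq.mpr (eisensteinHom_apply ⟨a, b⟩).symm

theorem exists_eq_add_mul_ωZ (z : Zω) : ∃ a b : ℤ, z = a + b * ωZ := by
  obtain ⟨y, rfl⟩ := eisensteinHom_surjective z
  exact ⟨y.re, y.im, eisensteinHom_apply y⟩

instance : Module.Free ℤ Zω := .of_equiv eisensteinEquiv.toLinearEquiv

instance : Module.Finite ℤ Zω := .equiv eisensteinEquiv.toLinearEquiv

theorem NmNat_add_mul_ωZ (a b : ℤ) : (NmNat (a + b * ωZ) : ℤ) = a ^ 2 - a * b + b ^ 2 := by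
  have h := normSq_eisensteinHom ⟨a, b⟩
  rw [eisensteinHom_apply] at h
  have h0 : 0 ≤ QuadraticAlgebra.norm (⟨a, b⟩ : QuadraticAlgebra ℤ (-1) (-1)) := by
    exact_mod_cast h ▸ normSq_nonneg _
  rw [NmNat, h, Int.natCast_floor_eq_floor (by exact_mod_cast h0), Int.floor_intCast,
    QuadraticAlgebra.norm_def]
  ring

theorem natCast_NmNat_eq_norm (z : Zω) : (NmNat z : ℤ) = (eisensteinEquiv.symm z).norm := by
  obtain ⟨a, b, rfl⟩ := exists_eq_add_mul_ωZ z
  rw [NmNat_add_mul_ωZ, eisensteinEquiv_symm_add_mul_ωZ, QuadraticAlgebra.norm_def]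
  ring

theorem natCast_NmNat_eq_normSq (z : Zω) : (NmNat z : ℝ) = normSq (z : ℂ) := by
  have h := normSq_eisensteinHom (eisensteinEquiv.symm z)
  rw [← natCast_NmNat_eq_norm] at h
  rw [← Int.cast_natCast, ← h]
  exact congrArg (fun w : Zω => normSq (w : ℂ)) (eisensteinEquiv.apply_symm_apply z)

theorem NmNat_mul (x y : Zω) : NmNat (x * y) = NmNat x * NmNat y := by
  zify
  simp [natCast_NmNat_eq_norm]

theorem NmNat_eq_zero {z : Zω} : NmNat z = 0 ↔ z = 0 := by
  rw [← Nat.cast_eq_zero (R := ℝ), natCast_NmNat_eq_normSq, map_eq_zero, ZeroMemClass.coe_eq_zero]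

theorem isUnit_iff_NmNat_eq_one {z : Zω} : IsUnit z ↔ NmNat z = 1 := by
  rw [← MulEquiv.isUnit_map eisensteinEquiv.symm, QuadraticAlgebra.isUnit_iff_norm_isUnit,
    ← natCast_NmNat_eq_norm, Int.isUnit_iff]
  omega

theorem exists_NmNat_sub_mul_lt (x : Zω) {y : Zω} (hy : y ≠ 0) :
    ∃ q : Zω, NmNat (x - y * q) < NmNat y := by
  have hyc : (y : ℂ) ≠ 0 := by simpa using hy
  obtain ⟨s, t, hst⟩ := exists_eq_add_mul_ω (x / y)
  refine ⟨round s + round t * ωZ, ?_⟩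
  have hfactor : ((x - y * (round s + round t * ωZ) : Zω) : ℂ) =
      y * (((s - round s : ℝ) : ℂ) + ((t - round t : ℝ) : ℂ) * ω) := by
    rw [div_eq_iff hyc] at hst
    push_cast
    rw [show ((ωZ : Zω) : ℂ) = ω from rfl, hst]
    ring
  have hlt : normSq (((s - round s : ℝ) : ℂ) + ((t - round t : ℝ) : ℂ) * ω) < 1 := by
    rw [normSq_add_mul_ω]
    have hs := abs_le.mp (abs_sub_round s)
    have ht := abs_le.mp (abs_sub_round t)
    nlinarith [hs.1, hs.2, ht.1, ht.2, sq_nonneg (s - round s + (t - round t))]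
  rw [← Nat.cast_lt (α := ℝ), natCast_NmNat_eq_normSq, natCast_NmNat_eq_normSq, hfactor,
    normSq_mul]
  exact mul_lt_of_lt_one_right (normSq_pos.mpr hyc) hlt

instance : IsPrincipalIdealRing Zω where
  principal I := by
    by_cases hI : I = ⊥
    · exact hI ▸ inferInstance
    obtain ⟨y, ⟨hyI, hy0⟩, hmin⟩ := WellFounded.has_min (measure NmNat).wf
      {y | y ∈ I ∧ y ≠ 0} (Submodule.exists_mem_ne_zero_of_ne_bot hI)
    refine ⟨y, le_antisymm (fun z hz => ?_) ((Ideal.span_singleton_le_iff_mem _).mpr hyI)⟩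
    obtain ⟨q, hq⟩ := exists_NmNat_sub_mul_lt z hy0
    have hmem : z - y * q ∈ I := I.sub_mem hz (I.mul_mem_right _ hyI)
    have hzero : z - y * q = 0 := by_contra fun h => hmin _ ⟨hmem, h⟩ hq
    exact Ideal.mem_span_singleton.mpr ⟨q, sub_eq_zero.mp hzero⟩

theorem card_quotient_span_singleton (p : Zω) : Nat.card (Zω ⧸ Ideal.span {p}) = NmNat p := by
  rw [← Submodule.cardQuot_apply, ← Ideal.absNorm_apply, Ideal.absNorm_span_singleton,
    ← Algebra.norm_eq_of_algEquiv eisensteinEquiv.symm, Algebra.norm_apply]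
  have h := QuadraticAlgebra.det_toLinearMap_eq_norm (eisensteinEquiv.symm p)
  rw [← natCast_NmNat_eq_norm] at h
  exact (congrArg Int.natAbs h).trans (Int.natAbs_natCast _)

theorem NmNat_one_add_three_mul (a b : ℤ) :
    (NmNat (1 + 3 * (a + b * ωZ)) : ℤ) = 1 + 3 * (2 * a - b) + 9 * (a ^ 2 - a * b + b ^ 2) := by
  have h := NmNat_add_mul_ωZ (1 + 3 * a) (3 * b)
  push_cast at h
  rw [show 1 + 3 * ((a : Zω) + b * ωZ) = 1 + 3 * a + 3 * b * ωZ by ring, h]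
  ring

theorem NmNat_mod_three {c : Zω} (hc : IsCoprime c 3) : NmNat c % 3 = 1 := by
  have hsq : (NmNat c : ZMod 3) = 0 ∨ (NmNat c : ZMod 3) = 1 := by
    obtain ⟨a, b, rfl⟩ := exists_eq_add_mul_ωZ c
    have h := congrArg (Int.cast : ℤ → ZMod 3) (NmNat_add_mul_ωZ a b)
    push_cast at h
    rw [h]
    generalize (a : ZMod 3) = a, (b : ZMod 3) = b
    decide +revert
  have hne : (NmNat c : ZMod 3) ≠ 0 := fun h0 => by
    obtain ⟨x, y, hxy⟩ := hc
    obtain ⟨a, b, hab⟩ := exists_eq_add_mul_ωZ (-y)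
    have hone : x * c = 1 + 3 * (a + b * ωZ) := by
      rw [← hab]
      linear_combination hxy
    have h := congrArg (Int.cast : ℤ → ZMod 3) (NmNat_one_add_three_mul a b)
    rw [← hone, NmNat_mul] at h
    push_cast at h
    rw [h0, show (9 : ZMod 3) = 0 from rfl, show (3 : ZMod 3) = 0 from rfl] at h
    simp at h
  have h1 : (NmNat c : ZMod 3) = (1 : ℕ) := by simpa using hsq.resolve_left hne
  exact (ZMod.natCast_eq_natCast_iff' _ _ _).mp h1

theorem eq_one_of_isUnit_of_three_dvd_sub_one {e : Zω} (he : IsUnit e) (h3 : 3 ∣ e - 1) :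
    e = 1 := by
  obtain ⟨z, hz⟩ := h3
  have h1 : ‖(e : ℂ)‖ = 1 := by
    rw [← sq_eq_sq₀ (norm_nonneg _) zero_le_one, ← normSq_eq_norm_sq, ← natCast_NmNat_eq_normSq,
      isUnit_iff_NmNat_eq_one.mp he, Nat.cast_one, one_pow]
  have hle : 3 * ‖(z : ℂ)‖ ≤ 2 := by
    calc 3 * ‖(z : ℂ)‖ = ‖(e : ℂ) - 1‖ := by
          rw [show (e : ℂ) - 1 = 3 * z from congrArg Subtype.val hz, norm_mul, RCLike.norm_ofNat]
      _ ≤ ‖(e : ℂ)‖ + ‖(1 : ℂ)‖ := norm_sub_le _ _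
      _ = 2 := by rw [h1, norm_one]; norm_num
  have hN : (NmNat z : ℝ) < 1 := by
    rw [natCast_NmNat_eq_normSq, normSq_eq_norm_sq]
    nlinarith [norm_nonneg (z : ℂ)]
  have hz0 : z = 0 := NmNat_eq_zero.mp (Nat.lt_one_iff.mp (by exact_mod_cast hN))
  rw [← sub_eq_zero, hz, hz0, mul_zero]

/-- The additive character `a + bω ↦ ω ^ b` of `ℤ[ω]`. Being trivial on `ℤ` and on `3ℤ[ω]` and
fixing the cube roots of unity, it turns sums of cube roots of unity into products. -/
noncomputable def omegaChar : AddChar Zω ℂ where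
  toFun z := ω ^ (eisensteinEquiv.symm z).im
  map_zero_eq_one' := by simp
  map_add_eq_mul' x y := by simp [zpow_add₀ (isPrimitiveRoot_ω.ne_zero (by norm_num))]

theorem omegaChar_add_mul_ωZ (a b : ℤ) : omegaChar (a + b * ωZ) = ω ^ b := by
  change ω ^ (eisensteinEquiv.symm _).im = _
  rw [eisensteinEquiv_symm_add_mul_ωZ]

theorem omegaChar_three_mul (z : Zω) : omegaChar (3 * z) = 1 := by
  obtain ⟨a, b, rfl⟩ := exists_eq_add_mul_ωZ z
  have h := omegaChar_add_mul_ωZ (3 * a) (3 * b)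
  push_cast at h
  rw [show 3 * ((a : Zω) + b * ωZ) = 3 * a + 3 * b * ωZ by ring, h,
    zpow_ω_eq (n := 0) ⟨b, by ring⟩, zpow_zero]

theorem omegaChar_eq_self_of_pow_three_eq_one {s : Zω} (hs : s ^ 3 = 1) : omegaChar s = s := by
  obtain ⟨i, hi, rfl⟩ := isPrimitiveRoot_ωZ.eq_pow_of_pow_eq_one hs
  interval_cases i
  · simpa using omegaChar_add_mul_ωZ 1 0
  · simpa [ωZ] using omegaChar_add_mul_ωZ 0 1
  · have h := omegaChar_add_mul_ωZ (-1) (-1)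
    rw [zpow_neg_one, ← eq_inv_of_mul_eq_one_left
      ((pow_succ ω 2).symm.trans isPrimitiveRoot_ω.pow_eq_one)] at h
    rw [ωZ_sq, ← show ω ^ 2 = ((-1 - ωZ : Zω) : ℂ) from congrArg Subtype.val ωZ_sq, ← h]
    push_cast
    ring_nf

theorem omegaChar_sum_eq_prod {ι : Type*} (s : Finset ι) {f : ι → Zω}
    (hf : ∀ i ∈ s, f i ^ 3 = 1) : omegaChar (∑ i ∈ s, f i) = ((∏ i ∈ s, f i : Zω) : ℂ) := by
  classical
  induction s using Finset.induction_on with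
  | empty => simp
  | insert i s hi ih =>
    rw [Finset.forall_mem_insert] at hf
    rw [Finset.sum_insert hi, Finset.prod_insert hi, AddChar.map_add_eq_mul, ih hf.2,
      omegaChar_eq_self_of_pow_three_eq_one hf.1, Subring.coe_mul]

end EisensteinIntegers

/-! ### Multiplicative characters of finite fields -/

section FiniteFieldCharacters

theorem eq_of_map_eq_of_pow_eq_one {R S : Type*} [CommRing R] [IsDomain R] [CommRing S]
    (f : R →+* S) {n : ℕ} (hn : (n : S) ≠ 0) {s t : R} (hs : s ^ n = 1) (ht : t ^ n = 1)
    (h : f s = f t) : s = t := by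
  have hn0 : n ≠ 0 := fun h0 => hn (by rw [h0, Nat.cast_zero])
  by_contra hst
  have hgeom : ∑ i ∈ Finset.range n, s ^ i * t ^ (n - 1 - i) = 0 := by
    have hmul := Commute.geom_sum₂_mul (Commute.all s t) n
    rw [hs, ht, sub_self] at hmul
    exact (mul_eq_zero.mp hmul).resolve_right (sub_ne_zero.mpr hst)
  have hcast : (n : S) * f t ^ (n - 1) = 0 := by
    simpa [h, geom_sum₂_self] using congrArg f hgeom
  have hunit : IsUnit (f t ^ (n - 1)) :=
    ((IsUnit.of_pow_eq_one ht hn0).map f).pow _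
  exact hn (hunit.mul_left_eq_zero.mp hcast)

theorem mulChar_apply_pow_eq_one {M R : Type*} [CommMonoid M] [CommMonoidWithZero R]
    {ψ : MulChar M R} {n : ℕ} (hψ : ψ ^ n = 1) {x : M} (hx : IsUnit x) : ψ x ^ n = 1 := by
  rw [← hx.unit_spec, ← MulChar.pow_apply_coe, hψ, MulChar.one_apply_coe]

variable {F : Type*} [Field F] [Fintype F]

section Polynomial

open Polynomial

theorem sum_eval_eq_zero_of_natDegree_lt {P : F[X]} (hP : P.natDegree < Fintype.card F - 1) :
    ∑ x : F, P.eval x = 0 := by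
  simp_rw [eval_eq_sum_range]
  rw [Finset.sum_comm]
  refine Finset.sum_eq_zero fun i hi => ?_
  rw [← Finset.mul_sum, FiniteField.sum_pow_lt_card_sub_one F i
    (by have := Finset.mem_range.mp hi; omega), mul_zero]

theorem prod_sub_filter_pow_eq [DecidableEq F] {a : F} {m k : ℕ}
    (hcard : Fintype.card F = m * k + 1) (ha : a ^ k = 1) (y : F) :
    ∏ x : F with x ^ m = a, (y - x) = y ^ m - a := by
  have hm : m ≠ 0 := by
    rintro rfl
    have := Fintype.one_lt_card (α := F)
    omega
  have hdvd : (X ^ m - C a : F[X]) ∣ X ^ Fintype.card F - X := by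
    have h := sub_dvd_pow_sub_pow (X ^ m : F[X]) (C a) k
    rw [← pow_mul, ← C_pow, ha, C_1] at h
    rw [hcard]
    exact (h.mul_right X).trans (dvd_of_eq (by ring))
  have hmonic : (X ^ m - C a : F[X]).Monic := monic_X_pow_sub_C a hm
  have hne : (X ^ Fintype.card F - X : F[X]) ≠ 0 :=
    FiniteField.X_pow_card_sub_X_ne_zero F Fintype.one_lt_card
  have hsplits : (X ^ m - C a : F[X]).Splits := Splits.of_dvd (splits_iff_card_roots.mpr (by
    rw [FiniteField.roots_X_pow_card_sub_X, FiniteField.X_pow_card_sub_X_natDegree_eq F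
      Fintype.one_lt_card, Finset.card_val, Finset.card_univ])) hne hdvd
  have hroots : (X ^ m - C a : F[X]).roots = (Finset.univ.filter fun x : F => x ^ m = a).val := by
    have hnodup : (X ^ m - C a : F[X]).roots.Nodup := by
      refine Multiset.nodup_of_le (roots.le_of_dvd hne hdvd) ?_
      rw [FiniteField.roots_X_pow_card_sub_X]
      exact Finset.univ.nodup
    refine (Multiset.Nodup.ext hnodup (Finset.nodup _)).mpr fun x => ?_
    simp [mem_roots hmonic.ne_zero, sub_eq_zero]
  have h := hsplits.eval_eq_prod_roots_of_monic hmonic y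
  rw [hroots, eval_sub, eval_pow, eval_X, eval_C] at h
  exact h.symm

end Polynomial

variable {R : Type*} [CommRing R]

theorem map_jacobiSum_eq_zero {ψ₁ ψ₂ : MulChar F R} (φ : R →+* F) {m k : ℕ}
    (h₁ : ∀ x, φ (ψ₁ x) = x ^ m) (h₂ : ∀ x, φ (ψ₂ x) = x ^ k)
    (hmk : m + k < Fintype.card F - 1) : φ (jacobiSum ψ₁ ψ₂) = 0 := by
  have hdeg : (Polynomial.X ^ m * (1 - Polynomial.X) ^ k : Polynomial F).natDegree ≤ m + k := by
    compute_degree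
  simpa [jacobiSum, h₁, h₂] using sum_eval_eq_zero_of_natDegree_lt (hdeg.trans_lt hmk)

theorem ne_one_of_map_eq_pow {ψ : MulChar F R} (φ : R →+* F) {m : ℕ} (hm : m ≠ 0)
    (hmcard : m < Fintype.card F - 1) (h : ∀ x, φ (ψ x) = x ^ m) : ψ ≠ 1 := by
  rintro rfl
  have hpow (u : Fˣ) : u ^ m = 1 := Units.ext <| by
    rw [Units.val_pow_eq_pow_val, ← h, MulChar.one_apply_coe, map_one, Units.val_one]
  exact hmcard.not_ge (Nat.le_of_dvd (Nat.pos_of_ne_zero hm)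
    ((FiniteField.forall_pow_eq_one_iff F m).mp hpow))

theorem normSq_jacobiSum {ψ₁ ψ₂ : MulChar F ℂ} (h₁ : ψ₁ ≠ 1) (h₂ : ψ₂ ≠ 1)
    (h₁₂ : ψ₁ * ψ₂ ≠ 1) : Complex.normSq (jacobiSum ψ₁ ψ₂) = Fintype.card F := by
  have hchar : ringChar ℂ ≠ ringChar F := by
    rw [ringChar.eq_zero]
    exact (CharP.ringChar_ne_zero_of_finite F).symm
  have hinv (ψ : MulChar F ℂ) : ψ⁻¹ = ψ.ringHomComp (starRingEnd ℂ) := (MulChar.star_eq_inv ψ).symm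
  have h := jacobiSum_mul_jacobiSum_inv hchar h₁ h₂ h₁₂
  rw [hinv, hinv, jacobiSum_ringHomComp, Complex.mul_conj] at h
  exact_mod_cast h

variable [IsDomain R] [DecidableEq R]

theorem natCast_mul_sum_filter_eq_sum_jacobiSum {ψ₁ : MulChar F R} (ψ₂ : MulChar F R) {n : ℕ}
    (hψ : ψ₁ ^ n = 1) {ζ : R} (hζ : ζ ^ n = 1) :
    n * ∑ x : F with ψ₁ x * ζ = 1, ψ₂ (1 - x) =
      ∑ j ∈ Finset.range n, ζ ^ j * jacobiSum (ψ₁ ^ j) ψ₂ := by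
  have horth (x : F) : ∑ j ∈ Finset.range n, ζ ^ j * (ψ₁ ^ j) x =
      if ψ₁ x * ζ = 1 then (n : R) else 0 := by
    rcases eq_or_ne x 0 with rfl | hx
    · simp [MulChar.map_zero]
    have hpow : ∑ j ∈ Finset.range n, ζ ^ j * (ψ₁ ^ j) x =
        ∑ j ∈ Finset.range n, (ψ₁ x * ζ) ^ j :=
      Finset.sum_congr rfl fun j _ => by
        rw [← Units.val_mk0 hx, MulChar.pow_apply_coe, mul_pow, mul_comm]
    have hroot : (ψ₁ x * ζ) ^ n = 1 := by
      rw [mul_pow, hζ, mul_one, mulChar_apply_pow_eq_one hψ hx.isUnit]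
    rw [hpow]
    split_ifs with h1
    · simp [h1]
    · have hmul := mul_geom_sum (ψ₁ x * ζ) n
      rw [hroot, sub_self] at hmul
      exact (mul_eq_zero.mp hmul).resolve_left (sub_ne_zero.mpr h1)
  simp_rw [jacobiSum, Finset.mul_sum, ← mul_assoc]
  rw [Finset.sum_comm, Finset.sum_filter]
  refine Finset.sum_congr rfl fun x _ => ?_
  rw [← Finset.sum_mul, horth, ite_mul, zero_mul]

theorem three_mul_sum_filter_eq {ψ : MulChar F R} (hψ : ψ ^ 3 = 1) (hψ1 : ψ ≠ 1) {ζ : R}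
    (hζ : IsPrimitiveRoot ζ 3) :
    3 * ∑ x : F with ψ x = ζ, ψ (1 - x) = ζ ^ 2 * (1 + jacobiSum ψ ψ) := by
  have hζ3 : ζ ^ 3 = 1 := hζ.pow_eq_one
  have hζsum : 1 + ζ + ζ ^ 2 = 0 := by
    simpa [Finset.sum_range_succ] using hζ.geom_sum_eq_zero (by norm_num)
  have hfilter (x : F) : ψ x * ζ ^ 2 = 1 ↔ ψ x = ζ :=
    ⟨fun h => by linear_combination ζ * h - ψ x * hζ3,
      fun h => by linear_combination ζ ^ 2 * h + hζ3⟩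
  have hinv : ψ ^ 2 = ψ⁻¹ := eq_inv_of_mul_eq_one_left ((pow_succ ψ 2).symm.trans hψ)
  have hneg : ψ (-1) = 1 := by
    rw [show (-1 : F) = (-1) ^ 3 by ring, map_pow, mulChar_apply_pow_eq_one hψ (by simp)]
  have h := natCast_mul_sum_filter_eq_sum_jacobiSum ψ hψ (ζ := ζ ^ 2)
    (by rw [← pow_mul', pow_mul, hζ3, one_pow])
  simp only [hfilter, Finset.sum_range_succ, Finset.sum_range_zero, pow_zero, pow_one, hinv,
    jacobiSum_one_nontrivial hψ1, jacobiSum_comm ψ⁻¹ ψ, jacobiSum_nontrivial_inv hψ1, hneg] at h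
  push_cast at h
  linear_combination h - ζ * hζ3 - hζsum

theorem map_one_sub_eq_prod {ψ : MulChar F R} (φ : R →+* F) {m k : ℕ}
    (hcard : Fintype.card F = m * k + 1) (hφ : ∀ x, φ (ψ x) = x ^ m) (hψ : ψ ^ k = 1)
    {ζ : R} (hζ : ζ ^ k = 1) : ψ (φ (1 - ζ)) = ∏ x : F with ψ x = ζ, ψ (1 - x) := by
  classical
  have hk : (k : F) ≠ 0 := fun h0 => by
    have h := FiniteField.cast_card_eq_zero F
    rw [hcard] at h
    simp [h0] at h
  have hk0 : k ≠ 0 := fun h0 => hk (by rw [h0, Nat.cast_zero])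
  have hφζ : φ ζ ^ k = 1 := by rw [← map_pow, hζ, map_one]
  have hfilter (x : F) : x ^ m = φ ζ ↔ ψ x = ζ := by
    refine ⟨fun h => ?_, fun h => by rw [← hφ, h]⟩
    rw [← hφ] at h
    have hx : x ≠ 0 := by
      rintro rfl
      rw [← h, MulChar.map_zero, map_zero, zero_pow hk0] at hφζ
      exact zero_ne_one hφζ
    exact eq_of_map_eq_of_pow_eq_one φ hk (mulChar_apply_pow_eq_one hψ hx.isUnit) hζ h
  have hprod := prod_sub_filter_pow_eq hcard hφζ 1
  rw [one_pow] at hprod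
  rw [map_sub, map_one, ← hprod, map_prod]
  simp only [hfilter]

end FiniteFieldCharacters

/-! ### The cubic residue symbol at prime and unit moduli -/

section PrimeModulus

variable {p : Zω}

theorem not_dvd_three_of_isCoprime (hp : Prime p) (h3 : IsCoprime p 3) : ¬ p ∣ 3 :=
  fun h => hp.not_isUnit (h3.isUnit_of_dvd' dvd_rfl h)

theorem eq_of_dvd_sub_of_pow_three_eq_one (hp : Prime p) (h3 : IsCoprime p 3) {s t : Zω}
    (hs : s ^ 3 = 1) (ht : t ^ 3 = 1) (h : p ∣ s - t) : s = t := by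
  refine eq_of_map_eq_of_pow_eq_one (Ideal.Quotient.mk (Ideal.span {p})) (fun h0 => ?_) hs ht
    (Ideal.Quotient.mk_eq_mk_iff_sub_mem _ _ |>.mpr (Ideal.mem_span_singleton.mpr h))
  rw [← map_natCast (Ideal.Quotient.mk _), Ideal.Quotient.eq_zero_iff_dvd] at h0
  exact not_dvd_three_of_isCoprime hp h3 (by exact_mod_cast h0)

theorem NmNat_sub_one_div_three_ne_zero (hp : Prime p) (h3 : IsCoprime p 3) :
    (NmNat p - 1) / 3 ≠ 0 := by
  have h1 : NmNat p ≠ 1 := fun h => hp.not_isUnit (isUnit_iff_NmNat_eq_one.mpr h)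
  have := NmNat_mod_three h3
  omega

end PrimeModulus

namespace IsCubicSymbol

variable {χ : Zω → Zω → Zω} {p : Zω}

theorem apply_mul (hχ : IsCubicSymbol χ) (a b₁ b₂ : Zω) : χ a (b₁ * b₂) = χ a b₁ * χ a b₂ :=
  hχ.1 a b₁ b₂

theorem mul_apply (hχ : IsCubicSymbol χ) (a₁ a₂ b : Zω) : χ (a₁ * a₂) b = χ a₁ b * χ a₂ b :=
  hχ.2.1 a₁ a₂ b

theorem apply_eq_zero (hχ : IsCubicSymbol χ) (hp : Prime p) (h3 : IsCoprime p 3) {a : Zω}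
    (ha : p ∣ a) : χ a p = 0 :=
  (hχ.2.2.2 a p hp h3).1 ha

theorem apply_pow_three (hχ : IsCubicSymbol χ) (hp : Prime p) (h3 : IsCoprime p 3) {a : Zω}
    (ha : ¬ p ∣ a) : χ a p ^ 3 = 1 := by
  refine Subtype.ext ?_
  have hω : ω ^ 3 = 1 := isPrimitiveRoot_ω.pow_eq_one
  rcases ((hχ.2.2.2 a p hp h3).2 ha).1 with h | h | h <;> push_cast <;> rw [h]
  · exact one_pow 3
  · exact hω
  · rw [← pow_mul', pow_mul, hω, one_pow]

theorem dvd_pow_sub_apply (hχ : IsCubicSymbol χ) (hp : Prime p) (h3 : IsCoprime p 3) (a : Zω) :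
    p ∣ a ^ ((NmNat p - 1) / 3) - χ a p := by
  by_cases ha : p ∣ a
  · rw [hχ.apply_eq_zero hp h3 ha, sub_zero]
    exact dvd_pow ha (NmNat_sub_one_div_three_ne_zero hp h3)
  · exact ((hχ.2.2.2 a p hp h3).2 ha).2

theorem apply_eq_of_dvd_pow_sub (hχ : IsCubicSymbol χ) (hp : Prime p) (h3 : IsCoprime p 3)
    {a s : Zω} (ha : ¬ p ∣ a) (hs : s ^ 3 = 1) (h : p ∣ a ^ ((NmNat p - 1) / 3) - s) :
    χ a p = s :=
  eq_of_dvd_sub_of_pow_three_eq_one hp h3 (hχ.apply_pow_three hp h3 ha) hs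
    (by simpa using dvd_sub h (hχ.dvd_pow_sub_apply hp h3 a))

theorem apply_congr (hχ : IsCubicSymbol χ) (hp : Prime p) (h3 : IsCoprime p 3) {a b : Zω}
    (h : p ∣ a - b) : χ a p = χ b p := by
  by_cases hb : p ∣ b
  · rw [hχ.apply_eq_zero hp h3 hb, hχ.apply_eq_zero hp h3 ((dvd_iff_dvd_of_dvd_sub h).mpr hb)]
  · refine hχ.apply_eq_of_dvd_pow_sub hp h3 (fun ha => hb ((dvd_iff_dvd_of_dvd_sub h).mp ha))
      (hχ.apply_pow_three hp h3 hb) ?_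
    simpa only [sub_add_sub_cancel] using
      dvd_add (h.trans (sub_dvd_pow_sub_pow a b ((NmNat p - 1) / 3))) (hχ.dvd_pow_sub_apply hp h3 b)

theorem apply_ωZ_of_prime (hχ : IsCubicSymbol χ) (hp : Prime p) (h3 : IsCoprime p 3) :
    χ ωZ p = ωZ ^ ((NmNat p - 1) / 3) := by
  have hω : ωZ ^ 3 = 1 := isPrimitiveRoot_ωZ.pow_eq_one
  refine hχ.apply_eq_of_dvd_pow_sub hp h3 (fun h => hp.not_isUnit ?_) ?_ (by simp)
  · exact isUnit_of_dvd_unit h (IsUnit.of_pow_eq_one hω three_ne_zero)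
  · rw [← pow_mul', pow_mul, hω, one_pow]

theorem apply_isUnit_mul (hχ : IsCubicSymbol χ) (hp : Prime p) (h3 : IsCoprime p 3) {a u : Zω}
    (hu : IsUnit u) (ha : ¬ p ∣ a) : χ a (u * p) = χ a p := by
  have hup : Associated (u * p) p := associated_unit_mul_left p u hu
  have hup3 : IsCoprime (u * p) 3 := (isCoprime_mul_unit_left_left hu p 3).mpr h3
  have hcongr := hχ.dvd_pow_sub_apply (hup.prime_iff.mpr hp) hup3 a
  rw [NmNat_mul, isUnit_iff_NmNat_eq_one.mp hu, one_mul] at hcongr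
  exact (hχ.apply_eq_of_dvd_pow_sub hp h3 ha (hχ.apply_pow_three (hup.prime_iff.mpr hp) hup3
    (hup.dvd_iff_dvd_left.not.mpr ha)) (hup.symm.dvd.trans hcongr)).symm

theorem apply_isUnit_of_dvd_three (hχ : IsCubicSymbol χ) {a u : Zω} (ha : a ∣ 3)
    (hu : IsUnit u) : χ a u = 1 := by
  have h2 : ¬ IsUnit (2 : Zω) := fun h => by
    have h4 := NmNat_add_mul_ωZ 2 0
    norm_num [isUnit_iff_NmNat_eq_one.mp h] at h4
  obtain ⟨p, hirr, hp2⟩ := WfDvdMonoid.exists_irreducible_factor h2 two_ne_zero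
  have hp : Prime p := hirr.prime
  have h3 : IsCoprime p 3 := IsCoprime.of_isCoprime_of_dvd_left ⟨-1, 1, by norm_num⟩ hp2
  have hpa : ¬ p ∣ a := fun h => not_dvd_three_of_isCoprime hp h3 (h.trans ha)
  have h := hχ.apply_isUnit_mul hp h3 hu hpa
  rw [hχ.apply_mul] at h
  have hne : χ a p ≠ 0 := fun h0 => by simpa [h0] using hχ.apply_pow_three hp h3 hpa
  exact (mul_eq_right₀ hne).mp h

open Ideal.Quotient in
/-- The symbol `χ · p` at a prime `p` coprime to `3`, as a multiplicative character of the residue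
field. -/
noncomputable def residueChar (hχ : IsCubicSymbol χ) (hp : Prime p) (h3 : IsCoprime p 3) :
    MulChar (Zω ⧸ Ideal.span {p}) Zω where
  toFun x := Quotient.liftOn' x (χ · p) fun _ _ h =>
    hχ.apply_congr hp h3 (Ideal.mem_span_singleton.mp ((Submodule.quotientRel_def _).mp h))
  map_one' := hχ.apply_eq_of_dvd_pow_sub hp h3 hp.not_dvd_one (one_pow 3) (by simp)
  map_mul' x y := Quotient.inductionOn₂' x y fun a b => hχ.mul_apply a b p
  map_nonunit' x := Quotient.inductionOn' x fun a ha => by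
    refine hχ.apply_eq_zero hp h3 (by_contra fun hpa => ha ?_)
    obtain ⟨u, v, huv⟩ := (hp.irreducible.coprime_iff_not_dvd).mpr hpa
    refine IsUnit.of_mul_eq_one (mk _ v) ?_
    rw [← map_one (mk (Ideal.span {p})), ← huv, map_add, map_mul, map_mul,
      Ideal.Quotient.eq_zero_iff_dvd p p |>.mpr dvd_rfl, mul_zero, zero_add, mul_comm]
    rfl

theorem residueChar_mk (hχ : IsCubicSymbol χ) (hp : Prime p) (h3 : IsCoprime p 3) (a : Zω) :
    hχ.residueChar hp h3 (Ideal.Quotient.mk _ a) = χ a p := rfl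

theorem residueChar_pow_three (hχ : IsCubicSymbol χ) (hp : Prime p) (h3 : IsCoprime p 3) :
    hχ.residueChar hp h3 ^ 3 = 1 := by
  refine MulChar.ext fun u => ?_
  obtain ⟨a, ha⟩ := Ideal.Quotient.mk_surjective (u : Zω ⧸ Ideal.span {p})
  rw [MulChar.pow_apply_coe, MulChar.one_apply_coe, ← ha, residueChar_mk]
  refine hχ.apply_pow_three hp h3 fun h => (u.isUnit.map (hχ.residueChar hp h3)).ne_zero ?_
  rw [← ha, residueChar_mk, hχ.apply_eq_zero hp h3 h]

theorem mk_residueChar (hχ : IsCubicSymbol χ) (hp : Prime p) (h3 : IsCoprime p 3)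
    (x : Zω ⧸ Ideal.span {p}) :
    Ideal.Quotient.mk (Ideal.span {p}) (hχ.residueChar hp h3 x) = x ^ ((NmNat p - 1) / 3) := by
  obtain ⟨a, rfl⟩ := Ideal.Quotient.mk_surjective x
  rw [residueChar_mk, ← map_pow, eq_comm, Ideal.Quotient.mk_eq_mk_iff_sub_mem,
    Ideal.mem_span_singleton]
  exact hχ.dvd_pow_sub_apply hp h3 a

end IsCubicSymbol

/-! ### The supplementary laws -/

section JacobiSum

variable {F : Type*} [Field F] [Fintype F] {ψ : MulChar F Zω} {m : ℕ}

theorem NmNat_jacobiSum_self (hψ : ψ ^ 3 = 1) (hψ1 : ψ ≠ 1) :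
    NmNat (jacobiSum ψ ψ) = Fintype.card F := by
  have hinj : Function.Injective Zω.subtype := Subtype.val_injective
  have hne : ψ.ringHomComp Zω.subtype ≠ 1 := (MulChar.ringHomComp_ne_one_iff hinj).mpr hψ1
  have hne2 : ψ.ringHomComp Zω.subtype * ψ.ringHomComp Zω.subtype ≠ 1 := by
    rw [← MulChar.ringHomComp_mul, MulChar.ringHomComp_ne_one_iff hinj]
    intro h
    exact hψ1 (by rwa [pow_succ, pow_two, h, one_mul] at hψ)
  have h := normSq_jacobiSum hne hne hne2
  rw [jacobiSum_ringHomComp] at h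
  rw [← Nat.cast_inj (R := ℝ), natCast_NmNat_eq_normSq]
  exact h

theorem exists_neg_jacobiSum_eq (φ : Zω →+* F) (hcard : Fintype.card F = m * 3 + 1)
    (hφ : ∀ x, φ (ψ x) = x ^ m) (hψ : ψ ^ 3 = 1) (hψ1 : ψ ≠ 1) :
    ∃ w, -jacobiSum ψ ψ = 1 + 3 * w ∧ (ψ (φ lamZ) : ℂ) = omegaChar ((1 + ωZ) * w) := by
  classical
  have hω : ωZ ^ 3 = 1 := isPrimitiveRoot_ωZ.pow_eq_one
  have hsum := three_mul_sum_filter_eq hψ hψ1 isPrimitiveRoot_ωZ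
  have hprod := map_one_sub_eq_prod φ hcard hφ hψ hω
  set T := ∑ x : F with ψ x = ωZ, ψ (1 - x) with hT
  refine ⟨-(ωZ * T), by linear_combination ωZ * hsum + (1 + jacobiSum ψ ψ) * hω, ?_⟩
  rw [show (1 + ωZ) * -(ωZ * T) = T by linear_combination (-T) * ωZ_sq, hT,
    omegaChar_sum_eq_prod, lamZ, hprod]
  intro x hx
  refine mulChar_apply_pow_eq_one hψ (sub_ne_zero.mpr ?_).isUnit
  rintro rfl
  rw [Finset.mem_filter, map_one] at hx
  exact isPrimitiveRoot_ωZ.ne_one (by norm_num) hx.2.symm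

theorem exists_isUnit_mul_eq (φ : Zω →+* F) {p : Zω} (hker : ∀ a, φ a = 0 → p ∣ a)
    (hp : NmNat p = Fintype.card F) (hcard : Fintype.card F = m * 3 + 1)
    (hφ : ∀ x, φ (ψ x) = x ^ m) (hψ : ψ ^ 3 = 1) :
    ∃ e w, IsUnit e ∧ e * p = 1 + 3 * w ∧ (ψ (φ lamZ) : ℂ) = omegaChar ((1 + ωZ) * w) := by
  have hm : m ≠ 0 := by
    have := Fintype.one_lt_card (α := F)
    omega
  have hψ1 : ψ ≠ 1 := ne_one_of_map_eq_pow φ hm (by omega) hφ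
  obtain ⟨w, hJ, hw⟩ := exists_neg_jacobiSum_eq φ hcard hφ hψ hψ1
  obtain ⟨t, ht⟩ := hker _ (map_jacobiSum_eq_zero φ hφ hφ (by omega))
  have hN : NmNat p * NmNat t = NmNat p := by
    rw [← NmNat_mul, ← ht, NmNat_jacobiSum_self hψ hψ1, hp]
  have hunit : IsUnit t :=
    isUnit_iff_NmNat_eq_one.mpr ((mul_eq_left₀ (hp.trans_ne Fintype.card_ne_zero)).mp hN)
  exact ⟨-t, w, hunit.neg, by linear_combination ht + hJ, hw⟩

end JacobiSum

/-- The supplementary law for `λ` at the modulus `c`, for the primary associate `1 + 3w` of `c`. -/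
def HasLambdaLaw (χ : Zω → Zω → Zω) (c : Zω) : Prop :=
  ∃ e w : Zω, IsUnit e ∧ e * c = 1 + 3 * w ∧ (χ lamZ c : ℂ) = omegaChar ((1 + ωZ) * w)

theorem lamZ_dvd_three : lamZ ∣ 3 := ⟨2 + ωZ, by
  rw [lamZ]
  linear_combination ωZ_sq⟩

theorem HasLambdaLaw.mul {χ : Zω → Zω → Zω} (hχ : IsCubicSymbol χ) {c d : Zω}
    (hc : HasLambdaLaw χ c) (hd : HasLambdaLaw χ d) : HasLambdaLaw χ (c * d) := by
  obtain ⟨e, w, he, hec, hw⟩ := hc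
  obtain ⟨f, v, hf, hfd, hv⟩ := hd
  refine ⟨e * f, w + v + 3 * (w * v), he.mul hf, ?_, ?_⟩
  · linear_combination f * d * hec + (1 + 3 * w) * hfd
  · rw [show (1 + ωZ) * (w + v + 3 * (w * v)) =
        (1 + ωZ) * w + (1 + ωZ) * v + 3 * ((1 + ωZ) * (w * v)) by ring,
      AddChar.map_add_eq_mul, AddChar.map_add_eq_mul, omegaChar_three_mul, mul_one, ← hw, ← hv,
      hχ.apply_mul, Subring.coe_mul]

theorem mul_sub_one_div_modEq {x y n : ℕ} (hx : x % n = 1) (hy : y % n = 1) :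
    (x * y - 1) / n ≡ (x - 1) / n + (y - 1) / n [MOD n] := by
  rcases n.eq_zero_or_pos with rfl | hn
  · simp
  obtain ⟨a, rfl⟩ : ∃ a, x = n * a + 1 := ⟨x / n, by rw [← hx, Nat.div_add_mod]⟩
  obtain ⟨b, rfl⟩ : ∃ b, y = n * b + 1 := ⟨y / n, by rw [← hy, Nat.div_add_mod]⟩
  have hmul : (n * a + 1) * (n * b + 1) - 1 = n * (a + b + n * (a * b)) :=
    Nat.sub_eq_of_eq_add (by ring)
  simp only [hmul, Nat.add_sub_cancel, Nat.mul_div_cancel_left _ hn]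
  exact Nat.add_modulus_mul_modEq_iff.mpr rfl

namespace IsCubicSymbol

variable {χ : Zω → Zω → Zω}

theorem hasLambdaLaw_of_isUnit (hχ : IsCubicSymbol χ) {c : Zω} (hc : IsUnit c) :
    HasLambdaLaw χ c := by
  obtain ⟨e, he⟩ := hc.exists_left_inv
  refine ⟨e, 0, IsUnit.of_mul_eq_one _ he, by rw [he, mul_zero, add_zero], ?_⟩
  rw [hχ.apply_isUnit_of_dvd_three lamZ_dvd_three hc, mul_zero, AddChar.map_zero_eq_one,
    Subring.coe_one]

theorem hasLambdaLaw_of_prime (hχ : IsCubicSymbol χ) {p : Zω} (hp : Prime p)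
    (h3 : IsCoprime p 3) : HasLambdaLaw χ p := by
  have : (Ideal.span {p}).IsMaximal :=
    PrincipalIdealRing.isMaximal_of_irreducible hp.irreducible
  let _ : Field (Zω ⧸ Ideal.span {p}) := Ideal.Quotient.field _
  have hcard := card_quotient_span_singleton p
  have : Finite (Zω ⧸ Ideal.span {p}) :=
    Nat.finite_of_card_ne_zero (hcard.trans_ne (NmNat_eq_zero.not.mpr hp.ne_zero))
  let _ : Fintype (Zω ⧸ Ideal.span {p}) := Fintype.ofFinite _
  rw [Nat.card_eq_fintype_card] at hcard
  refine exists_isUnit_mul_eq (Ideal.Quotient.mk _)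
    (fun a => (Ideal.Quotient.eq_zero_iff_dvd p a).mp) hcard.symm ?_ (hχ.mk_residueChar hp h3)
    (hχ.residueChar_pow_three hp h3)
  have := NmNat_mod_three h3
  omega

theorem hasLambdaLaw (hχ : IsCubicSymbol χ) {c : Zω} (hc : IsCoprime c 3) :
    HasLambdaLaw χ c := by
  induction c using UniqueFactorizationMonoid.induction_on_prime with
  | h₁ => exact absurd (NmNat_mod_three hc) (by simp [NmNat])
  | h₂ u hu => exact hχ.hasLambdaLaw_of_isUnit hu
  | h₃ d p _ hp ih =>
    exact .mul hχ (hχ.hasLambdaLaw_of_prime hp hc.of_mul_left_left) (ih hc.of_mul_left_right)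

theorem apply_lamZ_one_add_three_mul (hχ : IsCubicSymbol χ) (a b : ℤ) :
    (χ lamZ (1 + 3 * (a + b * ωZ)) : ℂ) = ω ^ a := by
  obtain ⟨w, hw⟩ : ∃ w : Zω, w = a + b * ωZ := ⟨_, rfl⟩
  rw [← hw]
  obtain ⟨e, v, he, hev, hv⟩ := hχ.hasLambdaLaw (c := 1 + 3 * w) ⟨1, -w, by ring⟩
  obtain rfl : e = 1 := eq_one_of_isUnit_of_three_dvd_sub_one he
    ⟨v - e * w, by linear_combination hev⟩
  have h3 : (3 : Zω) ≠ 0 := OfNat.ofNat_ne_zero 3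
  have hchar := omegaChar_add_mul_ωZ (a - b) a
  push_cast at hchar
  rw [hv, ← mul_left_cancel₀ h3 (show 3 * w = 3 * v by linear_combination hev), hw, ← hchar]
  congr 1
  linear_combination (b : Zω) * ωZ_sq

theorem apply_ωZ (hχ : IsCubicSymbol χ) {c : Zω} (hc : IsCoprime c 3) :
    χ ωZ c = ωZ ^ ((NmNat c - 1) / 3) := by
  have hω : ωZ ^ 3 = 1 := isPrimitiveRoot_ωZ.pow_eq_one
  induction c using UniqueFactorizationMonoid.induction_on_prime with
  | h₁ => simpa [NmNat] using NmNat_mod_three hc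
  | h₂ u hu =>
    rw [isUnit_iff_NmNat_eq_one.mp hu]
    simpa using hχ.apply_isUnit_of_dvd_three
      ((IsUnit.of_pow_eq_one hω three_ne_zero).dvd) hu
  | h₃ d p _ hp ih =>
    have hp3 := hc.of_mul_left_left
    have hd3 := hc.of_mul_left_right
    have hexp := mul_sub_one_div_modEq (NmNat_mod_three hp3) (NmNat_mod_three hd3)
    rw [hχ.apply_mul, hχ.apply_ωZ_of_prime hp hp3, ih hd3, ← pow_add, NmNat_mul,
      pow_eq_pow_of_modEq hexp hω]

theorem apply_ωZ_one_add_three_mul (hχ : IsCubicSymbol χ) (a b : ℤ) :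
    (χ ωZ (1 + 3 * (a + b * ωZ)) : ℂ) = ω ^ (2 * a - b) := by
  rw [hχ.apply_ωZ ⟨1, -(a + b * ωZ), by ring⟩]
  have hN := NmNat_one_add_three_mul a b
  set N := NmNat (1 + 3 * (a + b * ωZ))
  change ω ^ ((N - 1) / 3) = _
  rw [← zpow_natCast]
  exact zpow_ω_eq ⟨a ^ 2 - a * b + b ^ 2, by omega⟩

end IsCubicSymbol

theorem supplementary_laws_general {χ : Zω → Zω → Zω} (hχ : IsCubicSymbol χ) {c : Zω} {α₂ α₃ : ℤ}
    (h : (9 : Zω) ∣ c - (1 + (α₂ : Zω) * lamZ ^ 2 + (α₃ : Zω) * lamZ ^ 3)) :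
    (χ ωZ c : ℂ) = ω ^ α₂ ∧ (χ lamZ c : ℂ) = ω ^ (-α₃) := by
  obtain ⟨z, hz⟩ := h
  obtain ⟨k, l, rfl⟩ := exists_eq_add_mul_ωZ z
  obtain rfl : c = 1 + 3 * ((3 * k - α₃ : ℤ) + (3 * l - α₂ - 2 * α₃ : ℤ) * ωZ) := by
    rw [lamZ] at hz
    push_cast
    linear_combination hz + (α₂ + α₃ * (4 - ωZ)) * ωZ_sq
  rw [hχ.apply_ωZ_one_add_three_mul, hχ.apply_lamZ_one_add_three_mul]
  exact ⟨zpow_ω_eq ⟨2 * k - l, by ring⟩, zpow_ω_eq ⟨k, by ring⟩⟩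

open Complex in
/-- supplementary laws of cubic reciprocity. If
`c ≡ 1 + α₂λ² + α₃λ³ (mod 9)` with `α₂, α₃ ∈ {-1,0,1}`, then `(ω/c)₃ = ω^{α₂}`
and `(λ/c)₃ = ω^{-α₃}`; in particular if `c ≡ 1 (mod 9)` then
`(ω/c)₃ = (λ/c)₃ = 1`. -/
theorem supplementary_laws (χ : Zω → Zω → Zω) (hχ : IsCubicSymbol χ) :
    (∀ (c : Zω) (α₂ α₃ : ℤ), α₂ ∈ ({-1, 0, 1} : Set ℤ) → α₃ ∈ ({-1, 0, 1} : Set ℤ) →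
      (9 : Zω) ∣ (c - (1 + (α₂ : Zω) * lamZ ^ 2 + (α₃ : Zω) * lamZ ^ 3)) →
      ((χ ωZ c : Zω) : ℂ) = ω ^ α₂ ∧ ((χ lamZ c : Zω) : ℂ) = ω ^ (-α₃)) ∧
    (∀ c : Zω, (9 : Zω) ∣ (c - 1) → χ ωZ c = 1 ∧ χ lamZ c = 1) := by
  refine ⟨fun c α₂ α₃ _ _ h => supplementary_laws_general hχ h, fun c h => ?_⟩
  have hc := supplementary_laws_general hχ (c := c) (α₂ := 0) (α₃ := 0) (by simpa using h)
  exact ⟨Subtype.ext (by simpa using hc.1), Subtype.ext (by simpa using hc.2)⟩
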